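/- Fix t > 0, ξ > 0, y₀ > 0 and p < 1/4, and let C(k,τ) be the call price in the reflected CEV-variance model. Let k ∈ ℝ and suppose σ : (τ₁, ∞) → (0,∞) satisfies BS(k, σ(τ)², τ) = C(k,τ) for all τ > τ₁ (the implied volatility). Then lim_{τ→∞} σ(τ)²·τ / ( 8(1-2p)·log τ ) = 1; that is, σ(τ)² ∼ 8(1-2p)·(log τ)/τ as τ → ∞. -/

import Mathlib

/-- The standard normal cumulative distribution function. -/
noncomputable def Phi (x : ℝ) : ℝ :=
  ∫ s in Set.Iic x, Real.exp (-(s ^ 2) / 2) / Real.sqrt (2 * Real.pi)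

/-- The Black–Scholes call price. -/
noncomputable def BS (k w T : ℝ) : ℝ :=
  Phi (-k / Real.sqrt (w * T) + Real.sqrt (w * T) / 2)
    - Real.exp k * Phi (-k / Real.sqrt (w * T) - Real.sqrt (w * T) / 2)

/-- The modified Bessel function of the first kind of order `ν`. -/
noncomputable def besselI (ν x : ℝ) : ℝ :=
  ∑' m : ℕ, (x / 2) ^ (2 * (m : ℝ) + ν) / ((m.factorial : ℝ) * Real.Gamma ((m : ℝ) + ν + 1))

/-!
A Black–Scholes call is worth `1 - E[min(S, e ^ k)]` with `S` lognormal of mean `1` and total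
variance `v`, and `log E[min(S, e ^ k)] ~ -v / 8` as `v → ∞`. It therefore suffices to find the
order of magnitude of the mixture `∫ E[min(S, e ^ k)] ζ(y) dy`, where `v = y τ`. The integrand
decays exponentially in `y τ`, so only the mass of `ζ` at distance `O(1 / τ)` from the origin
matters: if `ζ` has total mass `1` and the order of `y ^ (q - 1)` at the origin, then the mixture
has the order of `τ ^ (-q)`, and taking logarithms gives `σ² τ / 8 ~ q log τ`.

The reflected CEV density is the law of a power of a reflected Bessel process. Its total mass
follows by integrating the power series of `I_ν` termwise (Weber's integral), and its behaviour at
the origin from `I_ν(x) ~ (x / 2) ^ ν / Γ(ν + 1)`; this gives `q = 1 - 2 p`.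
-/

open MeasureTheory ProbabilityTheory Filter Asymptotics Set
open scoped Topology Nat

theorem isEquivalent_log_of_isTheta {α : Type*} {l : Filter α} {f g : α → ℝ} (h : f =Θ[l] g)
    (hg : Tendsto (fun x => ‖Real.log (g x)‖) l atTop) :
    (fun x => Real.log (f x)) ~[l] fun x => Real.log (g x) := by
  obtain ⟨c, hc, hfg⟩ := h.1.exists_pos
  obtain ⟨d, hd, hgf⟩ := h.2.exists_pos
  have hbounded : (fun x => Real.log (f x) - Real.log (g x)) =O[l] fun _ => (1 : ℝ) := by
    refine .of_bound (|Real.log c| + |Real.log d|) ?_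
    filter_upwards [hfg.bound, hgf.bound, hg.eventually_gt_atTop 0] with x hfx hgx hlog
    have hg0 : g x ≠ 0 := by intro h0; simp [h0] at hlog
    have hf0 : f x ≠ 0 := by intro h0; simp [h0, hg0] at hgx
    have upper := Real.log_le_log (norm_pos_iff.2 hf0) hfx
    have lower := Real.log_le_log (norm_pos_iff.2 hg0) hgx
    rw [Real.log_mul hc.ne' (norm_ne_zero_iff.2 hg0)] at upper
    rw [Real.log_mul hd.ne' (norm_ne_zero_iff.2 hf0)] at lower
    simp only [Real.norm_eq_abs, Real.log_abs, abs_one, mul_one] at upper lower ⊢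
    rw [abs_le]
    constructor <;> linarith [le_abs_self (Real.log c), le_abs_self (Real.log d),
      abs_nonneg (Real.log c), abs_nonneg (Real.log d)]
  exact hbounded.trans_isLittleO ((isLittleO_one_left_iff ℝ).2 hg)

theorem isTheta_comp_tendsto {α β : Type*} {l : Filter α} {l' : Filter β} {f g : α → ℝ}
    (h : f =Θ[l] g) {u : β → α} (hu : Tendsto u l' l) : (f ∘ u) =Θ[l'] (g ∘ u) :=
  ⟨h.1.comp_tendsto hu, h.2.comp_tendsto hu⟩

theorem isLittleO_sqrt_atTop : (fun x : ℝ => √x) =o[atTop] fun x => x := by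
  refine isLittleO_of_tendsto' ?_ ?_
  · filter_upwards [eventually_gt_atTop 0] with x hx h0 using absurd h0 hx.ne'
  · simp only [Real.sqrt_div_self]
    exact Real.tendsto_sqrt_atTop.inv_tendsto_atTop

section Normal

variable {x : ℝ}

lemma Phi_eq_integral_gaussianPDFReal (x : ℝ) : Phi x = ∫ s in Iic x, gaussianPDFReal 0 1 s := by
  refine integral_congr_ae (.of_forall fun s => ?_)
  simp [gaussianPDFReal, div_eq_inv_mul]

lemma Phi_eq_cdf (x : ℝ) : Phi x = cdf (gaussianReal 0 1) x := by
  rw [cdf_eq_real, measureReal_def, gaussianReal_apply_eq_integral 0 one_ne_zero,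
    ENNReal.toReal_ofReal (integral_nonneg fun s => gaussianPDFReal_nonneg 0 1 s),
    Phi_eq_integral_gaussianPDFReal]

lemma Phi_nonneg (x : ℝ) : 0 ≤ Phi x :=
  Phi_eq_cdf x ▸ cdf_nonneg _ x

lemma monotone_Phi : Monotone Phi := fun x y hxy => by
  simpa only [Phi_eq_cdf] using monotone_cdf _ hxy

lemma one_sub_Phi (x : ℝ) : 1 - Phi x = Phi (-x) := by
  have hreflect : (gaussianReal 0 1).map (fun s => -s) = gaussianReal 0 1 := by
    simpa using gaussianReal_map_neg (μ := 0) (v := 1)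
  have := nullSingletonClass_gaussianReal (μ := 0) (v := 1) one_ne_zero
  rw [Phi_eq_cdf, Phi_eq_cdf, cdf_eq_real, cdf_eq_real,
    ← probReal_compl_eq_one_sub measurableSet_Iic, compl_Iic, measureReal_congr Ioi_ae_eq_Ici]
  conv_rhs => rw [← hreflect, map_measureReal_apply measurable_neg measurableSet_Iic]
  simp

lemma Phi_le_exp {l : ℝ} (hl : 0 ≤ l) (x : ℝ) : Phi x ≤ Real.exp (l * x + l ^ 2 / 2) := by
  have chernoff := measure_le_le_exp_mul_mgf (μ := gaussianReal 0 1) (X := id) x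
    (neg_nonpos.2 hl) (integrable_exp_mul_gaussianReal (-l))
  rw [mgf_id_gaussianReal, ← Real.exp_add] at chernoff
  rw [Phi_eq_cdf, cdf_eq_real]
  simpa [Iic] using chernoff

lemma gaussianPDFReal_anti {x y : ℝ} (hxy : |x| ≤ |y|) :
    gaussianPDFReal 0 1 y ≤ gaussianPDFReal 0 1 x := by
  have := sq_le_sq.2 hxy
  simp only [gaussianPDFReal, sub_zero]
  gcongr

lemma gaussianPDFReal_add_one_le_Phi_neg (hx : 0 ≤ x) :
    gaussianPDFReal 0 1 (x + 1) ≤ Phi (-x) := by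
  have hint := integrable_gaussianPDFReal 0 1
  calc gaussianPDFReal 0 1 (x + 1)
      = ∫ _ in Ioc (-(x + 1)) (-x), gaussianPDFReal 0 1 (x + 1) := by simp
    _ ≤ ∫ s in Ioc (-(x + 1)) (-x), gaussianPDFReal 0 1 s := by
        refine setIntegral_mono_on (by simp) hint.integrableOn measurableSet_Ioc fun s hs => ?_
        refine gaussianPDFReal_anti ?_
        rw [abs_of_nonneg (show 0 ≤ x + 1 by linarith), abs_le]
        constructor <;> linarith [hs.1, hs.2]
    _ ≤ ∫ s in Iic (-x), gaussianPDFReal 0 1 s :=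
        setIntegral_mono_set hint.integrableOn (.of_forall (gaussianPDFReal_nonneg 0 1))
          Ioc_subset_Iic_self.eventuallyLE
    _ = Phi (-x) := (Phi_eq_integral_gaussianPDFReal _).symm

end Normal

/-- The price `E[min(S, exp k)]` of a covered call with log-strike `k`, where `S` is lognormal with
mean `1` and total variance `v`; it is the complement of the Black–Scholes call price. -/
noncomputable def coveredCall (k v : ℝ) : ℝ :=
  Phi (k / √v - √v / 2) + Real.exp k * Phi (-k / √v - √v / 2)

section CoveredCall

variable {k v : ℝ}

lemma BS_eq_one_sub_coveredCall (k w T : ℝ) : BS k w T = 1 - coveredCall k (w * T) := by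
  have h := one_sub_Phi (-k / √(w * T) + √(w * T) / 2)
  rw [neg_add', neg_div, neg_neg] at h
  rw [BS, coveredCall, ← h, neg_div]
  ring

lemma coveredCall_nonneg (k v : ℝ) : 0 ≤ coveredCall k v :=
  add_nonneg (Phi_nonneg _) (mul_nonneg (Real.exp_pos k).le (Phi_nonneg _))

lemma measurable_coveredCall (k : ℝ) : Measurable (coveredCall k) := by
  have := monotone_Phi.measurable
  unfold coveredCall
  fun_prop

-- Chernoff's bound with the parameter `√v / 2` for both terms.
lemma coveredCall_le_exp (k : ℝ) (hv : 0 < v) :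
    coveredCall k v ≤ 2 * Real.exp (k / 2) * Real.exp (-(1 / 8 * v)) := by
  have : √v ≠ 0 := (Real.sqrt_pos.2 hv).ne'
  have chernoff (j : ℝ) : Phi (j / √v - √v / 2) ≤ Real.exp (j / 2 - 1 / 8 * v) := by
    refine (Phi_le_exp (l := √v / 2) (by positivity) _).trans_eq ?_
    congr 1
    field_simp
    linear_combination -8 * Real.sq_sqrt hv.le
  calc coveredCall k v
      ≤ Real.exp (k / 2 - 1 / 8 * v) + Real.exp k * Real.exp (-k / 2 - 1 / 8 * v) :=
        add_le_add (chernoff k) (mul_le_mul_of_nonneg_left (chernoff (-k)) (Real.exp_pos k).le)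
    _ = 2 * Real.exp (k / 2) * Real.exp (-(1 / 8 * v)) := by
        rw [mul_assoc, ← Real.exp_add, ← Real.exp_add, two_mul]
        congr 2
        ring

lemma min_mul_Phi_le_coveredCall (k v : ℝ) :
    min 1 (Real.exp k) * Phi (-(√v / 2)) ≤ coveredCall k v := by
  have hs : 0 ≤ √v := Real.sqrt_nonneg v
  rcases le_total 0 k with hk | hk
  · calc min 1 (Real.exp k) * Phi (-(√v / 2))
        ≤ 1 * Phi (k / √v - √v / 2) := by
          gcongr
          · exact Phi_nonneg _
          · exact min_le_left _ _
          · exact monotone_Phi (by linarith [div_nonneg hk hs])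
      _ ≤ coveredCall k v := by
          rw [one_mul]
          exact le_add_of_nonneg_right (mul_nonneg (Real.exp_pos k).le (Phi_nonneg _))
  · calc min 1 (Real.exp k) * Phi (-(√v / 2))
        ≤ Real.exp k * Phi (-k / √v - √v / 2) := by
          gcongr
          · exact Phi_nonneg _
          · exact min_le_right _ _
          · exact monotone_Phi (by linarith [div_nonneg (neg_nonneg.2 hk) hs])
      _ ≤ coveredCall k v := le_add_of_nonneg_left (Phi_nonneg _)

lemma min_mul_gaussianPDFReal_le_coveredCall (k v : ℝ) :
    min 1 (Real.exp k) * gaussianPDFReal 0 1 (√v / 2 + 1) ≤ coveredCall k v :=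
  (mul_le_mul_of_nonneg_left (gaussianPDFReal_add_one_le_Phi_neg (by positivity))
    (by positivity)).trans (min_mul_Phi_le_coveredCall k v)

lemma exists_pos_forall_le_coveredCall (k M : ℝ) :
    ∃ c > 0, ∀ v ≤ M, c ≤ coveredCall k v := by
  refine ⟨min 1 (Real.exp k) * gaussianPDFReal 0 1 (√M / 2 + 1),
    mul_pos (by positivity) (gaussianPDFReal_pos 0 1 _ one_ne_zero), fun v hv => ?_⟩
  refine le_trans ?_ (min_mul_gaussianPDFReal_le_coveredCall k v)
  gcongr
  refine gaussianPDFReal_anti ?_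
  rw [abs_of_nonneg (by positivity), abs_of_nonneg (by positivity)]
  gcongr

lemma tendsto_atTop_of_tendsto_coveredCall {α : Type*} {l : Filter α} {v : α → ℝ}
    (h : Tendsto (fun x => coveredCall k (v x)) l (𝓝 0)) : Tendsto v l atTop := by
  refine tendsto_atTop.2 fun M => ?_
  obtain ⟨c, hc, hle⟩ := exists_pos_forall_le_coveredCall k M
  filter_upwards [h.eventually_lt_const hc] with x hx
  exact le_of_not_ge fun hM => hx.not_ge (hle _ hM)

lemma isEquivalent_log_coveredCall (k : ℝ) :
    (fun v => Real.log (coveredCall k v)) ~[atTop] fun v => -(1 / 8 * v) := by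
  set m := min 1 (Real.exp k)
  have hm : 0 < m := by positivity
  set U := |Real.log 2 + k / 2|
  set L := |Real.log m - Real.log √(2 * Real.pi) - 1 / 2|
  have hdiff : (fun v => Real.log (coveredCall k v) - -(1 / 8 * v)) =O[atTop] fun v => √v := by
    refine .of_bound (U + L + 1) ?_
    filter_upwards [eventually_ge_atTop 1] with v hv
    have hv0 : 0 < v := by linarith
    have hs : 1 ≤ √v := Real.one_le_sqrt.2 hv
    have hlow : 0 < m * gaussianPDFReal 0 1 (√v / 2 + 1) :=
      mul_pos hm (gaussianPDFReal_pos 0 1 _ one_ne_zero)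
    have hle := min_mul_gaussianPDFReal_le_coveredCall k v
    have lower := Real.log_le_log hlow hle
    have upper := Real.log_le_log (hlow.trans_le hle) (coveredCall_le_exp k hv0)
    rw [Real.log_mul (by positivity) (by positivity), Real.log_mul (by positivity) (by positivity),
      Real.log_exp, Real.log_exp] at upper
    rw [Real.log_mul hm.ne' (gaussianPDFReal_pos 0 1 _ one_ne_zero).ne', gaussianPDFReal,
      Real.log_mul (by positivity) (by positivity), Real.log_inv, Real.log_exp] at lower
    simp only [NNReal.coe_one, mul_one, sub_zero] at lower
    rw [Real.norm_eq_abs, Real.norm_of_nonneg (Real.sqrt_nonneg v), abs_le]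
    have hU : Real.log 2 + k / 2 ≤ U := le_abs_self _
    have hL : -L ≤ Real.log m - Real.log √(2 * Real.pi) - 1 / 2 := neg_abs_le _
    have hU0 : 0 ≤ U := abs_nonneg _
    have hL0 : 0 ≤ L := abs_nonneg _
    constructor <;> nlinarith [Real.sq_sqrt hv0.le]
  refine hdiff.trans_isLittleO (isLittleO_sqrt_atTop.trans_isTheta ?_)
  simpa [neg_mul] using (isTheta_refl (fun v : ℝ => v) atTop).const_mul_right
    (show (-(1 / 8) : ℝ) ≠ 0 by norm_num)

end CoveredCall

section Laplace

variable {h f : ℝ → ℝ} {b c q K A δ τ : ℝ}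

lemma integrableOn_comp_mul_right_mul (hh : Measurable h) (hK : ∀ v > 0, ‖h v‖ ≤ K)
    (hf : IntegrableOn f (Ioi 0)) (hτ : 0 < τ) :
    IntegrableOn (fun y => h (y * τ) * f y) (Ioi 0) := by
  refine Integrable.bdd_mul (c := K) hf (hh.comp (measurable_mul_const τ)).aestronglyMeasurable ?_
  filter_upwards [ae_restrict_mem measurableSet_Ioi] with y hy using hK _ (mul_pos hy hτ)

lemma norm_integral_comp_mul_right_mul_le (hb : 0 < b) (hq : 0 < q)
    (hh : ∀ v > 0, ‖h v‖ ≤ K * Real.exp (-(b * v))) (hf : IntegrableOn f (Ioi 0))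
    (hA : 0 ≤ A) (hfA : ∀ y ∈ Ioo 0 δ, ‖f y‖ ≤ A * y ^ (q - 1)) (hτ : 0 < τ) :
    ‖∫ y in Ioi 0, h (y * τ) * f y‖ ≤
      K * (A * ((1 / (b * τ)) ^ q * Real.Gamma q) +
        Real.exp (-(b * δ) * τ) * ∫ y in Ioi 0, ‖f y‖) := by
  have hK : 0 ≤ K := nonneg_of_mul_nonneg_left ((norm_nonneg _).trans (hh 1 one_pos))
    (Real.exp_pos _)
  have gamma_integral := Real.integral_rpow_mul_exp_neg_mul_Ioi hq (mul_pos hb hτ)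
  have gamma_integrable :
      IntegrableOn (fun y => y ^ (q - 1) * Real.exp (-(b * τ * y))) (Ioi 0) := by
    refine Integrable.of_integral_ne_zero ?_
    rw [gamma_integral]
    exact (mul_pos (by positivity) (Real.Gamma_pos_of_pos hq)).ne'
  rw [← gamma_integral, ← integral_const_mul, ← integral_const_mul (Real.exp _),
    ← integral_add (gamma_integrable.const_mul A) (hf.norm.const_mul _), ← integral_const_mul]
  refine norm_integral_le_of_norm_le
    (((gamma_integrable.const_mul A).add (hf.norm.const_mul _)).const_mul K) ?_
  filter_upwards [ae_restrict_mem measurableSet_Ioi] with y (hy : 0 < y)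
  rw [norm_mul]
  refine (mul_le_mul_of_nonneg_right (hh _ (mul_pos hy hτ)) (norm_nonneg _)).trans ?_
  rw [mul_assoc]
  refine mul_le_mul_of_nonneg_left ?_ hK
  rcases lt_or_ge y δ with hyδ | hyδ
  · refine le_add_of_le_of_nonneg ?_ (by positivity)
    calc Real.exp (-(b * (y * τ))) * ‖f y‖
        ≤ Real.exp (-(b * (y * τ))) * (A * y ^ (q - 1)) := by gcongr; exact hfA y ⟨hy, hyδ⟩
      _ = A * (y ^ (q - 1) * Real.exp (-(b * τ * y))) := by ring_nf
  · refine le_add_of_nonneg_of_le (by positivity) ?_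
    gcongr
    nlinarith [mul_le_mul_of_nonneg_left hyδ (mul_pos hb hτ).le]

lemma isBigO_integral_comp_mul_right_mul (hb : 0 < b) (hq : 0 < q)
    (hh : ∀ v > 0, ‖h v‖ ≤ K * Real.exp (-(b * v))) (hf : IntegrableOn f (Ioi 0))
    (hfq : f =O[𝓝[>] 0] fun y => y ^ (q - 1)) :
    (fun τ => ∫ y in Ioi 0, h (y * τ) * f y) =O[atTop] fun τ => τ ^ (-q) := by
  obtain ⟨A, hA, hfA⟩ := hfq.exists_pos
  obtain ⟨δ, hδ, hfδ⟩ := mem_nhdsGT_iff_exists_Ioo_subset.1 hfA.bound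
  replace hfδ : ∀ y ∈ Ioo 0 δ, ‖f y‖ ≤ A * y ^ (q - 1) := fun y hy => by
    simpa only [mem_ofPred_eq, Real.norm_of_nonneg (Real.rpow_nonneg hy.1.le _)] using hfδ hy
  have hexp := (isLittleO_exp_neg_mul_rpow_atTop (mul_pos hb hδ) (-q)).isBigO
  have hpow : (fun τ : ℝ => (1 / (b * τ)) ^ q) =O[atTop] fun τ => τ ^ (-q) := by
    refine ((isBigO_refl (fun τ : ℝ => τ ^ (-q)) atTop).const_mul_left (b ^ (-q))).congr' ?_ .rfl
    filter_upwards [eventually_gt_atTop 0] with τ hτ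
    rw [← Real.mul_rpow hb.le hτ.le, Real.rpow_neg (by positivity), one_div,
      Real.inv_rpow (by positivity)]
  refine IsBigO.trans (.of_bound' ?_)
    ((((hpow.const_mul_left (Real.Gamma q)).const_mul_left A).add
      (hexp.const_mul_left (∫ y in Ioi 0, ‖f y‖))).const_mul_left K)
  filter_upwards [eventually_gt_atTop 0] with τ hτ
  refine (norm_integral_comp_mul_right_mul_le hb hq hh hf hA.le hfδ hτ).trans
    ((le_abs_self _).trans_eq ?_)
  rw [Real.norm_eq_abs]
  ring_nf

lemma mul_integral_Ioc_rpow_sub_one (hq : 0 < q) {x : ℝ} (hx : 0 ≤ x) :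
    q * ∫ y in Ioc 0 x, y ^ (q - 1) = x ^ q := by
  rw [← intervalIntegral.integral_of_le hx, integral_rpow (.inl (by linarith)), sub_add_cancel,
    Real.zero_rpow hq.ne', sub_zero, mul_div_cancel₀ _ hq.ne']

lemma rpow_neg_le_integral_comp_mul_right_mul (hq : 0 < q) (hc : 0 < c) (hA : 0 ≤ A)
    (hint : IntegrableOn (fun y => h (y * τ) * f y) (Ioi 0))
    (hh : ∀ v > 0, 0 ≤ h v) (hhc : ∀ v ∈ Ioc 0 1, c ≤ h v) (hf : ∀ y > 0, 0 ≤ f y)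
    (hfA : ∀ y ∈ Ioo 0 δ, y ^ (q - 1) ≤ A * f y) (hτ : 0 < τ) (hτδ : τ⁻¹ < δ) :
    τ ^ (-q) ≤ A * q / c * ∫ y in Ioi 0, h (y * τ) * f y := by
  have hsub : Ioc 0 τ⁻¹ ⊆ Ioi (0 : ℝ) := Ioc_subset_Ioi_self
  have hpos : 0 ≤ᵐ[volume.restrict (Ioi 0)] fun y => h (y * τ) * f y := by
    filter_upwards [ae_restrict_mem measurableSet_Ioi] with y hy
    exact mul_nonneg (hh _ (mul_pos hy hτ)) (hf y hy)
  have hpow : IntegrableOn (fun y : ℝ => y ^ (q - 1)) (Ioc 0 τ⁻¹) :=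
    (intervalIntegrable_iff_integrableOn_Ioc_of_le (by positivity)).1
      (intervalIntegral.intervalIntegrable_rpow' (by linarith))
  have pointwise : ∀ y ∈ Ioc 0 τ⁻¹, y ^ (q - 1) ≤ A / c * (h (y * τ) * f y) := fun y hy => by
    have hyτ : y * τ ≤ 1 := (le_div_iff₀ hτ).1 (by simpa using hy.2)
    calc y ^ (q - 1) ≤ A / c * (c * f y) :=
          (hfA y ⟨hy.1, hy.2.trans_lt hτδ⟩).trans_eq (by field_simp)
      _ ≤ A / c * (h (y * τ) * f y) := by
          gcongr
          · exact hf y hy.1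
          · exact hhc _ ⟨mul_pos hy.1 hτ, hyτ⟩
  calc τ ^ (-q) = q * ∫ y in Ioc 0 τ⁻¹, y ^ (q - 1) := by
        rw [mul_integral_Ioc_rpow_sub_one hq (by positivity), Real.rpow_neg hτ.le,
          Real.inv_rpow hτ.le]
    _ ≤ q * ∫ y in Ioc 0 τ⁻¹, A / c * (h (y * τ) * f y) :=
        mul_le_mul_of_nonneg_left (setIntegral_mono_on hpow ((hint.mono_set hsub).const_mul _)
          measurableSet_Ioc pointwise) hq.le
    _ = A * q / c * ∫ y in Ioc 0 τ⁻¹, h (y * τ) * f y := by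
        rw [integral_const_mul]
        ring
    _ ≤ A * q / c * ∫ y in Ioi 0, h (y * τ) * f y :=
        mul_le_mul_of_nonneg_left (setIntegral_mono_set hint hpos hsub.eventuallyLE)
          (by positivity)

lemma isBigO_rpow_neg_integral_comp_mul_right_mul (hq : 0 < q) (hc : 0 < c)
    (hint : ∀ τ > 0, IntegrableOn (fun y => h (y * τ) * f y) (Ioi 0))
    (hh : ∀ v > 0, 0 ≤ h v) (hhc : ∀ v ∈ Ioc 0 1, c ≤ h v) (hf : ∀ y > 0, 0 ≤ f y)
    (hfq : (fun y => y ^ (q - 1)) =O[𝓝[>] 0] f) :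
    (fun τ => τ ^ (-q)) =O[atTop] fun τ => ∫ y in Ioi 0, h (y * τ) * f y := by
  obtain ⟨A, hA, hfA⟩ := hfq.exists_pos
  obtain ⟨δ, hδ, hfδ⟩ := mem_nhdsGT_iff_exists_Ioo_subset.1 hfA.bound
  replace hfδ : ∀ y ∈ Ioo 0 δ, y ^ (q - 1) ≤ A * f y := fun y hy => by
    simpa only [mem_ofPred_eq, Real.norm_of_nonneg (Real.rpow_nonneg hy.1.le _),
      Real.norm_of_nonneg (hf y hy.1)] using hfδ hy
  refine .of_bound (A * q / c) ?_
  filter_upwards [eventually_gt_atTop δ⁻¹, eventually_gt_atTop 0] with τ hτδ hτ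
  rw [Real.norm_of_nonneg (by positivity)]
  exact (rpow_neg_le_integral_comp_mul_right_mul hq hc hA.le (hint τ hτ) hh hhc hf hfδ hτ
    (inv_lt_of_inv_lt₀ hδ hτδ)).trans (by gcongr; exact Real.le_norm_self _)

end Laplace

section ImpliedVariance

variable {k q : ℝ} {ζ w : ℝ → ℝ}

lemma norm_coveredCall_le_exp (k : ℝ) {v : ℝ} (hv : 0 < v) :
    ‖coveredCall k v‖ ≤ 2 * Real.exp (k / 2) * Real.exp (-(1 / 8 * v)) := by
  rw [Real.norm_of_nonneg (coveredCall_nonneg k v)]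
  exact coveredCall_le_exp k hv

lemma integrableOn_coveredCall_mul (k : ℝ) (hζ : IntegrableOn ζ (Ioi 0)) {τ : ℝ} (hτ : 0 < τ) :
    IntegrableOn (fun y => coveredCall k (y * τ) * ζ y) (Ioi 0) := by
  refine integrableOn_comp_mul_right_mul (K := 2 * Real.exp (k / 2)) (measurable_coveredCall k)
    (fun v hv => (norm_coveredCall_le_exp k hv).trans ?_) hζ hτ
  exact mul_le_of_le_one_right (by positivity) (Real.exp_le_one_iff.2 (by linarith))

lemma isTheta_integral_coveredCall_mul (k : ℝ) (hq : 0 < q) (hζ : ∀ y > 0, 0 ≤ ζ y)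
    (hζint : IntegrableOn ζ (Ioi 0)) (hζq : ζ =Θ[𝓝[>] 0] fun y => y ^ (q - 1)) :
    (fun τ => ∫ y in Ioi 0, coveredCall k (y * τ) * ζ y) =Θ[atTop] fun τ => τ ^ (-q) := by
  obtain ⟨c, hc, hle⟩ := exists_pos_forall_le_coveredCall k 1
  exact ⟨isBigO_integral_comp_mul_right_mul (by norm_num) hq
      (fun _ => norm_coveredCall_le_exp k) hζint hζq.1,
    isBigO_rpow_neg_integral_comp_mul_right_mul hq hc
      (fun _ => integrableOn_coveredCall_mul k hζint) (fun v _ => coveredCall_nonneg k v)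
      (fun v hv => hle v hv.2) hζ hζq.2⟩

lemma integral_BS_mul (k : ℝ) (hζ : ∫ y in Ioi 0, ζ y = 1) {τ : ℝ} (hτ : 0 < τ) :
    ∫ y in Ioi 0, BS k y τ * ζ y = 1 - ∫ y in Ioi 0, coveredCall k (y * τ) * ζ y := by
  have hint : IntegrableOn ζ (Ioi 0) := .of_integral_ne_zero (hζ ▸ one_ne_zero)
  simp only [BS_eq_one_sub_coveredCall, sub_mul, one_mul]
  rw [integral_sub hint (integrableOn_coveredCall_mul k hint hτ), hζ]

lemma tendsto_div_log_of_isTheta_coveredCall {v : ℝ → ℝ} (hq : 0 < q)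
    (hv : (fun τ => coveredCall k (v τ)) =Θ[atTop] fun τ => τ ^ (-q)) :
    Tendsto (fun τ => v τ / (8 * q * Real.log τ)) atTop (𝓝 1) := by
  have hlog : Tendsto (fun τ => ‖Real.log (τ ^ (-q))‖) atTop atTop := by
    refine (Real.tendsto_log_atTop.const_mul_atTop hq).congr' ?_
    filter_upwards [eventually_ge_atTop 1] with τ hτ
    rw [Real.log_rpow (by linarith), neg_mul, norm_neg,
      Real.norm_of_nonneg (mul_nonneg hq.le (Real.log_nonneg hτ))]
  have hv_atTop := tendsto_atTop_of_tendsto_coveredCall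
    (hv.tendsto_zero_iff.2 (tendsto_rpow_neg_atTop hq))
  have hequiv : (fun τ => -(1 / 8 * v τ)) ~[atTop] fun τ => Real.log (τ ^ (-q)) :=
    ((isEquivalent_log_coveredCall k).comp_tendsto hv_atTop).symm.trans
      (isEquivalent_log_of_isTheta hv hlog)
  have hne : ∀ᶠ τ in atTop, Real.log (τ ^ (-q)) ≠ 0 := by
    filter_upwards [hlog.eventually_gt_atTop 0] with τ hτ using norm_pos_iff.1 hτ
  refine ((isEquivalent_iff_tendsto_one hne).1 hequiv).congr' ?_
  filter_upwards [eventually_gt_atTop 0] with τ hτ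
  rw [Pi.div_apply, Real.log_rpow hτ, neg_mul, neg_div_neg_eq, one_div, ← div_eq_inv_mul, div_div,
    mul_assoc]

theorem tendsto_impliedVariance_mul_div_log (hq : 0 < q) (hζ : ∀ y > 0, 0 ≤ ζ y)
    (hζ_mass : ∫ y in Ioi 0, ζ y = 1) (hζq : ζ =Θ[𝓝[>] 0] fun y => y ^ (q - 1))
    (hw : ∀ᶠ τ in atTop, BS k (w τ) τ = ∫ y in Ioi 0, BS k y τ * ζ y) :
    Tendsto (fun τ => w τ * τ / (8 * q * Real.log τ)) atTop (𝓝 1) := by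
  have hint : IntegrableOn ζ (Ioi 0) := .of_integral_ne_zero (hζ_mass ▸ one_ne_zero)
  refine tendsto_div_log_of_isTheta_coveredCall (k := k) hq
    (EventuallyEq.trans_isTheta ?_ (isTheta_integral_coveredCall_mul k hq hζ hint hζq))
  filter_upwards [hw, eventually_gt_atTop 0] with τ hwτ hτ
  rw [BS_eq_one_sub_coveredCall, integral_BS_mul k hζ_mass hτ] at hwτ
  linarith

end ImpliedVariance

theorem Gamma_mul_pow_le_Gamma_natCast_add {s : ℝ} (hs : 0 < s) (m : ℕ) :
    Real.Gamma s * s ^ m ≤ Real.Gamma (m + s) := by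
  induction m with
  | zero => simp
  | succ m ih =>
    have hms : 0 < m + s := by positivity
    calc Real.Gamma s * s ^ (m + 1) = s * (Real.Gamma s * s ^ m) := by ring
      _ ≤ (m + s) * Real.Gamma (m + s) :=
        mul_le_mul (by simp) ih (by have := Real.Gamma_pos_of_pos hs; positivity) hms.le
      _ = Real.Gamma ((m + 1 : ℕ) + s) := by
        rw [← Real.Gamma_add_one hms.ne', Nat.cast_add_one]
        ring_nf

theorem hasSum_pow_div_factorial (x : ℝ) : HasSum (fun m : ℕ => x ^ m / m !) (Real.exp x) := by
  simpa only [Real.exp_eq_exp_ℝ] using NormedSpace.expSeries_div_hasSum_exp x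

/-- The `m`-th term of the power series defining `besselI ν x`. -/
noncomputable def besselITerm (ν x : ℝ) (m : ℕ) : ℝ :=
  (x / 2) ^ (2 * (m : ℝ) + ν) / ((m ! : ℝ) * Real.Gamma ((m : ℝ) + ν + 1))

section Bessel

variable {ν b c x : ℝ}

lemma besselITerm_nonneg (hν : -1 < ν) (hx : 0 < x) (m : ℕ) : 0 ≤ besselITerm ν x m := by
  have := Real.Gamma_pos_of_pos (show 0 < m + ν + 1 by linarith [(m.cast_nonneg : (0 : ℝ) ≤ m)])
  unfold besselITerm
  positivity

lemma besselITerm_zero : besselITerm ν x 0 = (x / 2) ^ ν / Real.Gamma (ν + 1) := by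
  simp [besselITerm]

lemma besselITerm_le (hν : -1 < ν) (hx : 0 < x) (m : ℕ) :
    besselITerm ν x m ≤
      (x / 2) ^ ν / Real.Gamma (ν + 1) * (((x / 2) ^ 2 / (ν + 1)) ^ m / m !) := by
  have hν' : 0 < ν + 1 := by linarith
  have := Real.Gamma_pos_of_pos hν'
  have hΓm : Real.Gamma (ν + 1) * (ν + 1) ^ m ≤ Real.Gamma (m + ν + 1) := by
    simpa only [add_assoc] using Gamma_mul_pow_le_Gamma_natCast_add hν' m
  have hpow : (x / 2) ^ (2 * (m : ℝ) + ν) = ((x / 2) ^ 2) ^ m * (x / 2) ^ ν := by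
    rw [Real.rpow_add (by positivity), ← pow_mul, ← Real.rpow_natCast, Nat.cast_mul, Nat.cast_two]
  calc besselITerm ν x m
      ≤ ((x / 2) ^ 2) ^ m * (x / 2) ^ ν / (m ! * (Real.Gamma (ν + 1) * (ν + 1) ^ m)) := by
        rw [besselITerm, hpow]
        gcongr
    _ = (x / 2) ^ ν / Real.Gamma (ν + 1) * (((x / 2) ^ 2 / (ν + 1)) ^ m / m !) := by
        rw [div_pow _ (ν + 1)]
        field_simp

lemma hasSum_besselITerm (hν : -1 < ν) (hx : 0 < x) :
    HasSum (besselITerm ν x) (besselI ν x) :=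
  (Summable.of_nonneg_of_le (besselITerm_nonneg hν hx) (besselITerm_le hν hx)
    ((hasSum_pow_div_factorial _).summable.mul_left _)).hasSum

lemma besselI_nonneg (hν : -1 < ν) (hx : 0 < x) : 0 ≤ besselI ν x :=
  (hasSum_besselITerm hν hx).nonneg (besselITerm_nonneg hν hx)

lemma rpow_div_Gamma_le_besselI (hν : -1 < ν) (hx : 0 < x) :
    (x / 2) ^ ν / Real.Gamma (ν + 1) ≤ besselI ν x :=
  besselITerm_zero.symm.trans_le
    (le_hasSum (hasSum_besselITerm hν hx) 0 fun m _ => besselITerm_nonneg hν hx m)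

lemma besselI_le_rpow_div_Gamma_mul_exp (hν : -1 < ν) (hx : 0 < x) :
    besselI ν x ≤ (x / 2) ^ ν / Real.Gamma (ν + 1) * Real.exp ((x / 2) ^ 2 / (ν + 1)) :=
  hasSum_le (besselITerm_le hν hx) (hasSum_besselITerm hν hx)
    ((hasSum_pow_div_factorial _).mul_left _)

lemma isTheta_besselI (hν : -1 < ν) : besselI ν =Θ[𝓝[>] 0] fun x => x ^ ν := by
  have hΓ := Real.Gamma_pos_of_pos (show 0 < ν + 1 by linarith)
  have hexp : Tendsto (fun x : ℝ => Real.exp ((x / 2) ^ 2 / (ν + 1))) (𝓝[>] 0) (𝓝 1) := by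
    have : Continuous fun x : ℝ => Real.exp ((x / 2) ^ 2 / (ν + 1)) := by fun_prop
    simpa using (this.tendsto 0).mono_left nhdsWithin_le_nhds
  have hequiv : besselI ν ~[𝓝[>] 0] fun x => (x / 2) ^ ν / Real.Gamma (ν + 1) := by
    rw [isEquivalent_iff_tendsto_one]
    · refine tendsto_of_tendsto_of_tendsto_of_le_of_le' tendsto_const_nhds hexp ?_ ?_
      · filter_upwards [self_mem_nhdsWithin] with x (hx : 0 < x)
        exact (one_le_div (by positivity)).2 (rpow_div_Gamma_le_besselI hν hx)
      · filter_upwards [self_mem_nhdsWithin] with x (hx : 0 < x)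
        exact (div_le_iff₀' (by positivity)).2 (besselI_le_rpow_div_Gamma_mul_exp hν hx)
    · filter_upwards [self_mem_nhdsWithin] with x (hx : 0 < x)
      positivity
  have hconst : (fun x => (x / 2) ^ ν / Real.Gamma (ν + 1)) =ᶠ[𝓝[>] 0]
      fun x => (2 ^ ν * Real.Gamma (ν + 1))⁻¹ * x ^ ν := by
    filter_upwards [self_mem_nhdsWithin] with x (hx : 0 < x)
    rw [Real.div_rpow hx.le two_pos.le, div_div, inv_mul_eq_div]
  exact (hequiv.trans_eventuallyEq hconst).isTheta.trans
    ((isTheta_refl _ _).const_mul_left (by positivity))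

lemma integral_rpow_mul_exp_neg_mul_sq_mul_besselITerm (hν : -1 < ν) (hb : 0 < b) (hc : 0 < c)
    (m : ℕ) :
    ∫ x in Ioi 0, x ^ (ν + 1) * Real.exp (-b * x ^ 2) * besselITerm ν (c * x) m =
      (c / 2) ^ ν / (2 * b ^ (ν + 1)) * ((c ^ 2 / (4 * b)) ^ m / m !) := by
  have : (0 : ℝ) ≤ m := m.cast_nonneg
  have hΓ := Real.Gamma_pos_of_pos (show 0 < m + ν + 1 by linarith)
  calc ∫ x in Ioi 0, x ^ (ν + 1) * Real.exp (-b * x ^ 2) * besselITerm ν (c * x) m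
      = ∫ x in Ioi 0, (c / 2) ^ (2 * m + ν) / (m ! * Real.Gamma (m + ν + 1)) *
          (x ^ (2 * m + 2 * ν + 1) * Real.exp (-b * x ^ (2 : ℝ))) := by
        refine setIntegral_congr_fun measurableSet_Ioi fun x (hx : 0 < x) => ?_
        have : x ^ (2 * m + 2 * ν + 1) = x ^ (ν + 1) * x ^ (2 * m + ν) := by
          rw [← Real.rpow_add hx]
          ring_nf
        rw [besselITerm, this, mul_div_right_comm c, Real.mul_rpow (by positivity) hx.le,
          Real.rpow_two]
        ring
    _ = (c / 2) ^ (2 * m + ν) / (m ! * Real.Gamma (m + ν + 1)) *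
          (b ^ (-(m + ν + 1)) * (1 / 2) * Real.Gamma (m + ν + 1)) := by
        rw [integral_const_mul, integral_rpow_mul_exp_neg_mul_rpow two_pos (by linarith) hb,
          neg_div,
          show (2 * m + 2 * ν + 1 + 1) / 2 = m + ν + 1 by ring]
    _ = (c / 2) ^ ν / (2 * b ^ (ν + 1)) * ((c ^ 2 / (4 * b)) ^ m / m !) := by
        have hbpow : b ^ (-(m + ν + 1)) = (b ^ m * b ^ (ν + 1))⁻¹ := by
          rw [Real.rpow_neg hb.le, add_assoc, Real.rpow_add hb, Real.rpow_natCast]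
        rw [hbpow, Real.rpow_add (by positivity), Real.rpow_mul (by positivity), Real.rpow_two,
          Real.rpow_natCast, show c ^ 2 / (4 * b) = (c / 2) ^ 2 / b by field_simp; norm_num,
          div_pow _ b]
        field_simp

theorem integral_rpow_mul_exp_neg_mul_sq_mul_besselI (hν : -1 < ν) (hb : 0 < b) (hc : 0 < c) :
    ∫ x in Ioi 0, x ^ (ν + 1) * Real.exp (-b * x ^ 2) * besselI ν (c * x) =
      (c / 2) ^ ν / (2 * b ^ (ν + 1)) * Real.exp (c ^ 2 / (4 * b)) := by
  have hterm := integral_rpow_mul_exp_neg_mul_sq_mul_besselITerm hν hb hc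
  have hsum := (hasSum_pow_div_factorial (c ^ 2 / (4 * b))).mul_left
    ((c / 2) ^ ν / (2 * b ^ (ν + 1)))
  have hnonneg (m : ℕ) : ∀ x > 0, 0 ≤ x ^ (ν + 1) * Real.exp (-b * x ^ 2) *
      besselITerm ν (c * x) m := fun x hx =>
    mul_nonneg (by positivity) (besselITerm_nonneg hν (by positivity) m)
  have hint (m : ℕ) : IntegrableOn (fun x => x ^ (ν + 1) * Real.exp (-b * x ^ 2) *
      besselITerm ν (c * x) m) (Ioi 0) := by
    refine .of_integral_ne_zero ?_
    rw [hterm m]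
    positivity
  have hsum_integral := hasSum_integral_of_summable_integral_norm hint <| by
    refine hsum.summable.congr fun m => ?_
    rw [← hterm m]
    exact setIntegral_congr_fun measurableSet_Ioi fun x hx =>
      (Real.norm_of_nonneg (hnonneg m x hx)).symm
  simp only [hterm] at hsum_integral
  rw [← hsum_integral.unique hsum]
  refine setIntegral_congr_fun measurableSet_Ioi fun x (hx : 0 < x) => ?_
  exact ((hasSum_besselITerm hν (by positivity)).mul_left _).tsum_eq.symm

end Bessel

/-- The transition density at time `s`, from `x₀` to `x`, of the Bessel process of index `ν`
reflected at the origin. -/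
noncomputable def besselDensity (ν s x₀ x : ℝ) : ℝ :=
  x₀ ^ (-ν) / s * x ^ (ν + 1) * Real.exp (-(x ^ 2 + x₀ ^ 2) / (2 * s)) * besselI ν (x₀ * x / s)

section BesselDensity

variable {ν s x₀ : ℝ}

lemma besselDensity_nonneg (hν : -1 < ν) (hs : 0 < s) (hx₀ : 0 < x₀) {x : ℝ} (hx : 0 < x) :
    0 ≤ besselDensity ν s x₀ x := by
  have := besselI_nonneg hν (show 0 < x₀ * x / s by positivity)
  unfold besselDensity
  positivity

lemma integral_besselDensity (hν : -1 < ν) (hs : 0 < s) (hx₀ : 0 < x₀) :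
    ∫ x in Ioi 0, besselDensity ν s x₀ x = 1 := by
  have hfactor (x : ℝ) : besselDensity ν s x₀ x =
      x₀ ^ (-ν) / s * Real.exp (-(x₀ ^ 2 / (2 * s))) *
        (x ^ (ν + 1) * Real.exp (-(1 / (2 * s)) * x ^ 2) * besselI ν (x₀ / s * x)) := by
    rw [besselDensity, show -(x ^ 2 + x₀ ^ 2) / (2 * s) =
      -(x₀ ^ 2 / (2 * s)) + -(1 / (2 * s)) * x ^ 2 by ring, Real.exp_add, mul_div_right_comm]
    ring
  have hexp : (x₀ / s) ^ 2 / (4 * (1 / (2 * s))) = x₀ ^ 2 / (2 * s) := by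
    field_simp
    norm_num
  have hpow : x₀ ^ (-ν) / s * ((x₀ / s / 2) ^ ν / (2 * (1 / (2 * s)) ^ (ν + 1))) = 1 := by
    rw [show x₀ / s / 2 = x₀ * (1 / (2 * s)) by ring, Real.mul_rpow hx₀.le (by positivity),
      Real.rpow_add_one (by positivity), Real.rpow_neg hx₀.le]
    field_simp
  simp only [hfactor]
  rw [integral_const_mul, integral_rpow_mul_exp_neg_mul_sq_mul_besselI hν (by positivity)
    (by positivity), hexp, mul_mul_mul_comm, hpow, one_mul, ← Real.exp_add, neg_add_cancel,
    Real.exp_zero]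

lemma isTheta_besselDensity (hν : -1 < ν) (hs : 0 < s) (hx₀ : 0 < x₀) :
    besselDensity ν s x₀ =Θ[𝓝[>] 0] fun x => x ^ (2 * ν + 1) := by
  have hexp : (fun x => Real.exp (-(x ^ 2 + x₀ ^ 2) / (2 * s))) =Θ[𝓝[>] 0] fun _ => (1 : ℝ) := by
    have hcont : Continuous fun x => Real.exp (-(x ^ 2 + x₀ ^ 2) / (2 * s)) := by fun_prop
    exact ((isEquivalent_const_iff_tendsto (Real.exp_ne_zero _)).2
      ((hcont.tendsto 0).mono_left nhdsWithin_le_nhds)).isTheta.trans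
      (isTheta_const_const (Real.exp_ne_zero _) one_ne_zero)
  have hscale : Tendsto (fun x => x₀ * x / s) (𝓝[>] 0) (𝓝[>] 0) := by
    simpa [mul_div_right_comm] using
      TendstoNhdsWithinIoi.const_mul (show 0 < x₀ / s by positivity) (tendsto_id (x := 𝓝[>] 0))
  have hfactor : (fun x => x₀ ^ (-ν) / s * x ^ (ν + 1)) =Θ[𝓝[>] 0] fun x => x ^ (ν + 1) :=
    (isTheta_refl _ _).const_mul_left (by positivity)
  refine ((hfactor.mul hexp).mul (isTheta_comp_tendsto (isTheta_besselI hν) hscale)).trans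
    (EventuallyEq.trans_isTheta ?_ ((isTheta_refl _ _).const_mul_left
      (show (x₀ / s) ^ ν ≠ 0 by positivity)))
  filter_upwards [self_mem_nhdsWithin] with x (hx : 0 < x)
  rw [Function.comp_apply, mul_one, mul_div_right_comm, Real.mul_rpow (by positivity) hx.le,
    mul_left_comm, ← Real.rpow_add hx]
  ring_nf

end BesselDensity

/-- The index of the Bessel process `y ^ (1 - p) / ((1 - p) * ξ)` when `dy = ξ y ^ p dW`. -/
noncomputable def cevIndex (p : ℝ) : ℝ :=
  1 / (2 * (p - 1))

/-- The density at time `t` of the variance process `dy = ξ y ^ p dW`, `y 0 = y₀`, reflected at the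
origin. -/
noncomputable def reflectedCEVDensity (t ξ y₀ p z : ℝ) : ℝ :=
  √y₀ * z ^ ((1 : ℝ) / 2 - 2 * p) / ((1 - p) * ξ ^ 2 * t)
    * Real.exp (-(z ^ (2 * (1 - p)) + y₀ ^ (2 * (1 - p))) / (2 * ξ ^ 2 * t * (1 - p) ^ 2))
    * besselI (cevIndex p) ((y₀ * z) ^ (1 - p) / ((1 - p) ^ 2 * ξ ^ 2 * t))

section ReflectedCEV

variable {t ξ y₀ p : ℝ}

lemma mul_cevIndex (hp : p ≠ 1) : (1 - p) * cevIndex p = -(1 / 2) := by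
  have : p - 1 ≠ 0 := sub_ne_zero.2 hp
  rw [cevIndex]
  field_simp
  ring

lemma neg_one_lt_cevIndex (hp : p < 1 / 2) : -1 < cevIndex p := by
  rw [cevIndex, lt_div_iff_of_neg (by linarith)]
  linarith

lemma reflectedCEVDensity_eq_besselDensity (hy₀ : 0 < y₀) (hp : p < 1) {y : ℝ} (hy : 0 < y) :
    reflectedCEVDensity t ξ y₀ p y = (1 - p) * y ^ (1 - p - 1) *
      besselDensity (cevIndex p) ((1 - p) ^ 2 * ξ ^ 2 * t) (y₀ ^ (1 - p)) (y ^ (1 - p)) := by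
  have ha : 1 - p ≠ 0 := by linarith
  have hsq (z : ℝ) (hz : 0 < z) : (z ^ (1 - p)) ^ 2 = z ^ (2 * (1 - p)) := by
    rw [← Real.rpow_mul_natCast hz.le, mul_comm]
    rfl
  have hsqrt : (y₀ ^ (1 - p)) ^ (-(cevIndex p)) = √y₀ := by
    rw [← Real.rpow_mul hy₀.le, mul_neg, mul_cevIndex hp.ne, neg_neg, Real.sqrt_eq_rpow]
  have hpow : y ^ ((1 : ℝ) / 2 - 2 * p) =
      y ^ (1 - p - 1) * (y ^ (1 - p)) ^ (cevIndex p + 1) := by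
    rw [← Real.rpow_mul hy.le, ← Real.rpow_add hy, mul_add, mul_cevIndex hp.ne]
    ring_nf
  have hconst : √y₀ / ((1 - p) * ξ ^ 2 * t) = (1 - p) * (√y₀ / ((1 - p) ^ 2 * ξ ^ 2 * t)) := by
    rw [← mul_div_assoc, show (1 - p) ^ 2 * ξ ^ 2 * t = (1 - p) * ((1 - p) * ξ ^ 2 * t) by ring,
      mul_div_mul_left _ _ ha]
  rw [reflectedCEVDensity, besselDensity, hsq y hy, hsq y₀ hy₀, hsqrt, hpow,
    Real.mul_rpow hy₀.le hy.le, mul_div_right_comm √y₀, hconst,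
    show 2 * ξ ^ 2 * t * (1 - p) ^ 2 = 2 * ((1 - p) ^ 2 * ξ ^ 2 * t) by ring]
  ring

lemma reflectedCEVDensity_nonneg (ht : 0 < t) (hξ : 0 < ξ) (hy₀ : 0 < y₀) (hp : p < 1 / 2) {y : ℝ}
    (hy : 0 < y) : 0 ≤ reflectedCEVDensity t ξ y₀ p y := by
  have hp' : 0 < 1 - p := by linarith
  rw [reflectedCEVDensity_eq_besselDensity hy₀ (by linarith) hy]
  exact mul_nonneg (by positivity) (besselDensity_nonneg (neg_one_lt_cevIndex hp)
    (by positivity) (by positivity) (by positivity))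

lemma integral_reflectedCEVDensity (ht : 0 < t) (hξ : 0 < ξ) (hy₀ : 0 < y₀) (hp : p < 1 / 2) :
    ∫ y in Ioi 0, reflectedCEVDensity t ξ y₀ p y = 1 := by
  have hp' : 0 < 1 - p := by linarith
  calc ∫ y in Ioi 0, reflectedCEVDensity t ξ y₀ p y
      = ∫ y in Ioi 0, ((1 - p) * y ^ (1 - p - 1)) • besselDensity (cevIndex p)
          ((1 - p) ^ 2 * ξ ^ 2 * t) (y₀ ^ (1 - p)) (y ^ (1 - p)) :=
        setIntegral_congr_fun measurableSet_Ioi fun y hy =>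
          reflectedCEVDensity_eq_besselDensity hy₀ (by linarith) hy
    _ = ∫ x in Ioi 0, besselDensity (cevIndex p) ((1 - p) ^ 2 * ξ ^ 2 * t)
          (y₀ ^ (1 - p)) x := integral_comp_rpow_Ioi_of_pos hp'
    _ = 1 := integral_besselDensity (neg_one_lt_cevIndex hp) (by positivity)
        (by positivity)

lemma isTheta_reflectedCEVDensity (ht : 0 < t) (hξ : 0 < ξ) (hy₀ : 0 < y₀) (hp : p < 1 / 2) :
    reflectedCEVDensity t ξ y₀ p =Θ[𝓝[>] 0] fun y => y ^ (1 - 2 * p - 1) := by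
  have hp' : 0 < 1 - p := by linarith
  have hpow : Tendsto (fun y : ℝ => y ^ (1 - p)) (𝓝[>] 0) (𝓝[>] 0) := by
    refine tendsto_nhdsWithin_iff.2 ⟨?_, ?_⟩
    · simpa only [Real.zero_rpow hp'.ne'] using
        (Real.continuousAt_rpow_const 0 _ (.inr hp'.le)).tendsto.mono_left nhdsWithin_le_nhds
    · filter_upwards [self_mem_nhdsWithin] with y hy using Real.rpow_pos_of_pos hy _
  have hbessel := isTheta_comp_tendsto (isTheta_besselDensity
    (neg_one_lt_cevIndex hp) (show 0 < (1 - p) ^ 2 * ξ ^ 2 * t by positivity)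
    (show 0 < y₀ ^ (1 - p) by positivity)) hpow
  have hjacobian := (isTheta_refl (fun y : ℝ => y ^ (1 - p - 1)) (𝓝[>] 0)).const_mul_left hp'.ne'
  refine EventuallyEq.trans_isTheta ?_ ((hjacobian.mul hbessel).trans_eventuallyEq ?_)
  · filter_upwards [self_mem_nhdsWithin] with y hy using
      reflectedCEVDensity_eq_besselDensity hy₀ (by linarith) hy
  · filter_upwards [self_mem_nhdsWithin] with y (hy : 0 < y)
    rw [Function.comp_apply, ← Real.rpow_mul hy.le, ← Real.rpow_add hy]
    congr 1
    linear_combination 2 * mul_cevIndex (show p ≠ 1 by linarith)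

end ReflectedCEV

theorem stmt_19_general {t ξ y₀ p : ℝ} (ht : 0 < t) (hξ : 0 < ξ) (hy₀ : 0 < y₀) (hp : p < 1 / 2)
    {k : ℝ} {σ : ℝ → ℝ}
    (hσ : ∀ᶠ τ in atTop,
      BS k (σ τ ^ 2) τ = ∫ y in Ioi 0, BS k y τ * reflectedCEVDensity t ξ y₀ p y) :
    Tendsto (fun τ => σ τ ^ 2 * τ / (8 * (1 - 2 * p) * Real.log τ)) atTop (𝓝 1) :=
  tendsto_impliedVariance_mul_div_log (by linarith)
    (fun _ => reflectedCEVDensity_nonneg ht hξ hy₀ hp) (integral_reflectedCEVDensity ht hξ hy₀ hp)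
    (isTheta_reflectedCEVDensity ht hξ hy₀ hp) hσ

theorem stmt_19 (t ξ y0 p : ℝ) (ht : 0 < t) (hξ : 0 < ξ) (hy0 : 0 < y0) (hp : p < 1 / 4)
    (k : ℝ) :
    let η : ℝ := 1 / (2 * (p - 1))
    -- the reflected CEV density (case `p < 1/4`)
    let ζ : ℝ → ℝ := fun z =>
      Real.sqrt y0 * z ^ ((1 : ℝ) / 2 - 2 * p) / ((1 - p) * ξ ^ 2 * t)
        * Real.exp (-(z ^ (2 * (1 - p)) + y0 ^ (2 * (1 - p))) / (2 * ξ ^ 2 * t * (1 - p) ^ 2))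
        * besselI η ((y0 * z) ^ (1 - p) / ((1 - p) ^ 2 * ξ ^ 2 * t))
    -- the call price
    let C : ℝ → ℝ := fun τ => ∫ y in Set.Ioi (0 : ℝ), BS k y τ * ζ y
    ∀ τ₁ : ℝ, ∀ σ : ℝ → ℝ,
      (∀ τ > τ₁, 0 < σ τ ∧ BS k (σ τ ^ 2) τ = C τ) →
      Filter.Tendsto (fun τ => σ τ ^ 2 * τ / (8 * (1 - 2 * p) * Real.log τ))
        Filter.atTop (nhds 1) := by
  intro η ζ C τ₁ σ hσ
  exact stmt_19_general ht hξ hy0 (by linarith)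
    ((eventually_gt_atTop τ₁).mono fun τ hτ => (hσ τ hτ).2)
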